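/- (Theorem A, case n = 1.) For X ∈ P₁ one has Re(X) ≠ (1/3)I, so the map f₁(X) = (1/3)I + ρ·(Re(X) − (1/3)I)/‖Re(X) − (1/3)I‖ is well defined and continuous on P₁. Its image is exactly the sphere S = { S : 3×3 real symmetric matrix | tr S = 1 and ‖S − (1/3)I‖ = ρ }, and for X, Y ∈ P₁ one has f₁(X) = f₁(Y) if and only if Y = X or Y is the entrywise complex conjugate of X. Moreover f₁ is SO(3)-equivariant: f₁(A·X·Aᵀ) = A·f₁(X)·Aᵀ for every real special orthogonal 3×3 matrix A (acting on X via the inclusion of real matrices into complex matrices). Consequently f₁ induces a homeomorphism from the quotient of P₁ by entrywise complex conjugation onto S. -/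

import Mathlib

/-!
For `X = x x*` with `x = u + i v`, the real part `R = u uᵀ + v vᵀ` is positive semidefinite of
trace `1` and rank at most `2`, so it is a boundary point of the convex body of positive
semidefinite real matrices of trace `1`. The map `f₁` is `Re` followed by the radial projection,
from the centre `I/3` of that body, of its boundary onto the sphere.

* Radial injectivity: `R` is singular, whereas `t R' + (1 - t) I/3` with `R'` positive semidefinite
  and `0 ≤ t < 1` is positive definite; so a ray from `I/3` meets the boundary only once
  (`one_le_of_ray`).
* Fibres of `Re`: by the Lagrange identity (`im_mul_im`) the products of two entries of `Im X` are
  polynomials in the entries of `R`, so `R` determines `Im X` up to a global sign, that is, `X` up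
  to conjugation.
* Surjectivity: `f₁` is equivariant under orthogonal matrices, so by the spectral theorem it is
  enough to reach the diagonal matrices of the sphere. If `-μ` is the smallest entry of the
  traceless diagonal matrix `D`, then `I/3 + D/(3μ)` has nonnegative entries, one of which
  vanishes, and so it is the real part of a point of `P₁` (`exists_diagonal`).
* The quotient of the compact space `P₁` is compact, the sphere is Hausdorff, and a continuous
  bijection from a compact space to a Hausdorff space is a homeomorphism.
-/

open Matrix

/-- The model `P₁` of the complex projective plane `CP²`: matrices
`X(x) i j = x i * conj (x j)` for unit vectors `x ∈ ℂ³`. -/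
def P1 : Set (Matrix (Fin 3) (Fin 3) ℂ) :=
  { M | ∃ x : Fin 3 → ℂ, (∑ i, ‖x i‖ ^ 2) = 1 ∧ ∀ i j, M i j = x i * starRingEnd ℂ (x j) }

/-- The Frobenius norm of a real `3 × 3` matrix. -/
noncomputable def frobR (S : Matrix (Fin 3) (Fin 3) ℝ) : ℝ :=
  Real.sqrt (∑ i, ∑ j, ‖S i j‖ ^ 2)

/-- The entrywise real part of a complex matrix. -/
def reMat (M : Matrix (Fin 3) (Fin 3) ℂ) : Matrix (Fin 3) (Fin 3) ℝ :=
  M.map Complex.re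

/-- The map `f₁(X) = (1/3)I + ρ (Re X - (1/3)I)/‖Re X - (1/3)I‖`, `ρ = √(2/3)`. -/
noncomputable def f1 (M : Matrix (Fin 3) (Fin 3) ℂ) : Matrix (Fin 3) (Fin 3) ℝ :=
  ((1 : ℝ)/3) • 1 +
    (Real.sqrt (2/3) / frobR (reMat M - ((1 : ℝ)/3) • 1)) • (reMat M - ((1 : ℝ)/3) • 1)

/-- The target sphere: real symmetric matrices of trace `1` at Frobenius distance
`ρ = √(2/3)` from `(1/3)I`. -/
def sphereS : Set (Matrix (Fin 3) (Fin 3) ℝ) :=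
  { S | S.IsSymm ∧ S.trace = 1 ∧ frobR (S - ((1 : ℝ)/3) • 1) = Real.sqrt (2/3) }

/-- Entrywise complex conjugation relation on `P₁`. -/
def conjRelP1 (p q : P1) : Prop :=
  (q : Matrix (Fin 3) (Fin 3) ℂ) = (p : Matrix (Fin 3) (Fin 3) ℂ) ∨
    (q : Matrix (Fin 3) (Fin 3) ℂ) = (p : Matrix (Fin 3) (Fin 3) ℂ).map (starRingEnd ℂ)

/-! ### Real and imaginary parts of points of `P₁` -/

/-- The coordinates of a point of `P₁` in terms of the real and imaginary parts `u`, `v` of the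
unit vector `x = u + i v`. -/
lemma exists_uv {X : Matrix (Fin 3) (Fin 3) ℂ} (hX : X ∈ P1) :
    ∃ u v : Fin 3 → ℝ, (∑ i, (u i ^ 2 + v i ^ 2)) = 1 ∧
      (∀ i j, (X i j).re = u i * u j + v i * v j) ∧
      (∀ i j, (X i j).im = v i * u j - u i * v j) := by
  obtain ⟨x, hx, hX⟩ := hX
  refine ⟨fun i => (x i).re, fun i => (x i).im, ?_, ?_, ?_⟩
  · rw [← hx]
    refine Finset.sum_congr rfl fun i _ => ?_
    rw [Complex.sq_norm, Complex.normSq_apply]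
    ring
  · intro i j
    simp [hX]
  · intro i j
    simp [hX]
    ring

lemma reMat_isSymm {X : Matrix (Fin 3) (Fin 3) ℂ} (hX : X ∈ P1) : (reMat X).IsSymm := by
  obtain ⟨u, v, -, hr, -⟩ := exists_uv hX
  ext i j
  simp only [reMat, transpose_apply, map_apply, hr]
  ring

lemma reMat_trace {X : Matrix (Fin 3) (Fin 3) ℂ} (hX : X ∈ P1) : (reMat X).trace = 1 := by
  obtain ⟨u, v, h1, hr, -⟩ := exists_uv hX
  rw [← h1]
  simp only [reMat, trace, diag_apply, map_apply, hr]
  exact Finset.sum_congr rfl fun i _ => by ring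

/-- The real part of a rank-one projection of `ℂ³` has rank at most `2`. -/
lemma reMat_det {X : Matrix (Fin 3) (Fin 3) ℂ} (hX : X ∈ P1) : (reMat X).det = 0 := by
  obtain ⟨u, v, -, hr, -⟩ := exists_uv hX
  rw [det_fin_three]
  simp only [reMat, map_apply, hr]
  ring

lemma reMat_nonneg {X : Matrix (Fin 3) (Fin 3) ℂ} (hX : X ∈ P1) (w : Fin 3 → ℝ) :
    0 ≤ w ⬝ᵥ (reMat X *ᵥ w) := by
  obtain ⟨u, v, -, hr, -⟩ := exists_uv hX
  have : w ⬝ᵥ (reMat X *ᵥ w) = (u ⬝ᵥ w) ^ 2 + (v ⬝ᵥ w) ^ 2 := by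
    simp only [reMat, dotProduct, mulVec, map_apply, hr, Fin.sum_univ_three]
    ring
  rw [this]
  positivity

lemma reMat_ne {X : Matrix (Fin 3) (Fin 3) ℂ} (hX : X ∈ P1) : reMat X ≠ ((1 : ℝ)/3) • 1 := by
  intro h
  have := reMat_det hX
  rw [h, det_smul, det_one] at this
  norm_num at this

/-- The Lagrange identity: the `2 × 2` minors of `Re X` are the products of two entries of
`Im X`. -/
lemma im_mul_im {X : Matrix (Fin 3) (Fin 3) ℂ} (hX : X ∈ P1) (i j k l : Fin 3) :
    (X i j).im * (X k l).im = reMat X i k * reMat X j l - reMat X i l * reMat X j k := by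
  obtain ⟨u, v, -, hr, hi⟩ := exists_uv hX
  simp only [reMat, map_apply, hr, hi]
  ring

lemma eq_or_conj_of_reMat_eq {X Y : Matrix (Fin 3) (Fin 3) ℂ} (hX : X ∈ P1) (hY : Y ∈ P1)
    (h : reMat X = reMat Y) : Y = X ∨ Y = X.map (starRingEnd ℂ) := by
  have hre : ∀ i j, (Y i j).re = (X i j).re := fun i j => (congrFun (congrFun h i) j).symm
  have him : ∀ i j k l, (Y i j).im * (Y k l).im = (X i j).im * (X k l).im := fun i j k l => by
    rw [im_mul_im hX, im_mul_im hY, h]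
  by_cases h0 : ∀ i j, (X i j).im = 0
  · left
    ext i j
    refine Complex.ext (hre i j) ?_
    have := him i j i j
    rw [h0, mul_zero, mul_self_eq_zero] at this
    rw [this, h0]
  · push Not at h0
    obtain ⟨i, j, hij⟩ := h0
    -- The sign of one nonzero entry of the imaginary part fixes the sign of all others.
    rcases mul_self_eq_mul_self_iff.1 (him i j i j) with hs | hs
    · left
      ext k l
      refine Complex.ext (hre k l) ?_
      have := him i j k l
      rw [hs] at this
      exact mul_left_cancel₀ hij this
    · right
      ext k l
      refine Complex.ext (by simpa using hre k l) ?_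
      have := him i j k l
      rw [hs] at this
      simp only [map_apply, Complex.conj_im]
      refine mul_left_cancel₀ hij ?_
      linarith

/-! ### The Frobenius norm and orthogonal conjugation -/

lemma frobR_eq_trace (S : Matrix (Fin 3) (Fin 3) ℝ) : frobR S = √(S * Sᵀ).trace := by
  simp [frobR, trace, mul_apply, pow_two]

lemma frobR_pos {S : Matrix (Fin 3) (Fin 3) ℝ} (h : S ≠ 0) : 0 < frobR S := by
  refine Real.sqrt_pos.2 ((Finset.sum_nonneg fun i _ => by positivity).lt_of_ne' fun h0 => h ?_)
  ext i j
  rw [Finset.sum_eq_zero_iff_of_nonneg (fun i _ => by positivity)] at h0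
  have := h0 i (Finset.mem_univ i)
  rw [Finset.sum_eq_zero_iff_of_nonneg (fun i _ => by positivity)] at this
  simpa using this j (Finset.mem_univ j)

lemma frobR_smul {c : ℝ} (hc : 0 ≤ c) (S : Matrix (Fin 3) (Fin 3) ℝ) :
    frobR (c • S) = c * frobR S := by
  rw [frobR, frobR, ← Real.sqrt_sq hc, ← Real.sqrt_mul (sq_nonneg _), Real.sqrt_sq hc]
  simp [Finset.mul_sum, mul_pow]

lemma frobR_conj {A : Matrix (Fin 3) (Fin 3) ℝ} (hA : A * Aᵀ = 1)
    (S : Matrix (Fin 3) (Fin 3) ℝ) : frobR (A * S * Aᵀ) = frobR S := by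
  have hA' : Aᵀ * A = 1 := mul_eq_one_comm.1 hA
  rw [frobR_eq_trace, frobR_eq_trace]
  congr 1
  calc (A * S * Aᵀ * (A * S * Aᵀ)ᵀ).trace
      = (A * (S * (Aᵀ * A) * Sᵀ * Aᵀ)).trace := by
        simp only [transpose_mul, transpose_transpose, Matrix.mul_assoc]
    _ = (S * Sᵀ * (Aᵀ * A)).trace := by
        rw [hA', trace_mul_comm, Matrix.mul_one, Matrix.mul_assoc _ Aᵀ, hA']
    _ = (S * Sᵀ).trace := by rw [hA', Matrix.mul_one]

lemma conj_sub_third {A : Matrix (Fin 3) (Fin 3) ℝ} (hA : A * Aᵀ = 1)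
    (S : Matrix (Fin 3) (Fin 3) ℝ) :
    A * S * Aᵀ - ((1 : ℝ)/3) • 1 = A * (S - ((1 : ℝ)/3) • 1) * Aᵀ := by
  rw [Matrix.mul_sub, Matrix.sub_mul, Matrix.mul_smul, Matrix.smul_mul, Matrix.mul_one, hA]

lemma reMat_conj (A : Matrix (Fin 3) (Fin 3) ℝ) (X : Matrix (Fin 3) (Fin 3) ℂ) :
    reMat (A.map Complex.ofReal * X * (A.map Complex.ofReal)ᵀ) = A * reMat X * Aᵀ := by
  ext i j
  simp [reMat, mul_apply, Fin.sum_univ_three]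

lemma f1_conj {A : Matrix (Fin 3) (Fin 3) ℝ} (hA : A * Aᵀ = 1) (X : Matrix (Fin 3) (Fin 3) ℂ) :
    f1 (A.map Complex.ofReal * X * (A.map Complex.ofReal)ᵀ) = A * f1 X * Aᵀ := by
  rw [f1, f1, reMat_conj, conj_sub_third hA, frobR_conj hA, Matrix.mul_add, Matrix.add_mul]
  simp only [Matrix.mul_smul, Matrix.smul_mul, Matrix.mul_one, hA]

lemma mem_P1_iff {X : Matrix (Fin 3) (Fin 3) ℂ} :
    X ∈ P1 ↔ X.trace = 1 ∧ ∃ x : Fin 3 → ℂ, X = vecMulVec x (star x) := by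
  have key : ∀ x : Fin 3 → ℂ, (vecMulVec x (star x)).trace = ((∑ i, ‖x i‖ ^ 2 : ℝ) : ℂ) := by
    intro x
    simp [trace, vecMulVec_apply, Complex.mul_conj']
  constructor
  · rintro ⟨x, hx, hX⟩
    have : X = vecMulVec x (star x) := by
      ext i j
      simp [hX, vecMulVec_apply]
    exact ⟨by rw [this, key, hx, Complex.ofReal_one], x, this⟩
  · rintro ⟨ht, x, rfl⟩
    refine ⟨x, ?_, fun i j => by simp [vecMulVec_apply]⟩
    rw [key] at ht
    exact_mod_cast ht

lemma conj_mem_P1 {A : Matrix (Fin 3) (Fin 3) ℝ} (hA : A * Aᵀ = 1)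
    {X : Matrix (Fin 3) (Fin 3) ℂ} (hX : X ∈ P1) :
    A.map Complex.ofReal * X * (A.map Complex.ofReal)ᵀ ∈ P1 := by
  obtain ⟨ht, x, rfl⟩ := mem_P1_iff.1 hX
  have hA' : Aᵀ * A = 1 := mul_eq_one_comm.1 hA
  have hC : (A.map Complex.ofReal)ᵀ * A.map Complex.ofReal = 1 := by
    have := congrArg (fun M : Matrix (Fin 3) (Fin 3) ℝ => M.map Complex.ofRealHom) hA'
    rw [Matrix.map_mul, Matrix.map_one _ (map_zero _) (map_one _)] at this
    exact this
  refine mem_P1_iff.2 ⟨?_, A.map Complex.ofReal *ᵥ x, ?_⟩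
  · rw [trace_mul_comm, ← Matrix.mul_assoc, hC, Matrix.one_mul, ht]
  · rw [mul_vecMulVec, vecMulVec_mul, vecMul_transpose]
    congr 1
    ext i
    simp [mulVec, dotProduct]

/-! ### Injectivity of the radial projection -/

/-- If `Re X` and `Re Y` lie on one ray from `I/3`, then `Re X` is at least as far from `I/3` as
`Re Y`: otherwise `Re X` would be positive definite, against `det (Re X) = 0`. -/
lemma one_le_of_ray {X Y : Matrix (Fin 3) (Fin 3) ℂ} (hX : X ∈ P1) (hY : Y ∈ P1) {t : ℝ}
    (ht : 0 < t) (h : reMat X - ((1 : ℝ)/3) • 1 = t • (reMat Y - ((1 : ℝ)/3) • 1)) : 1 ≤ t := by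
  by_contra! hlt
  obtain ⟨w, hw0, hw⟩ := exists_mulVec_eq_zero_iff.2 (reMat_det hX)
  have hpos : 0 < w ⬝ᵥ w := (dotProduct_self_star_pos_iff (v := w)).2 hw0
  have hq := congrArg (fun M : Matrix (Fin 3) (Fin 3) ℝ => w ⬝ᵥ (M *ᵥ w)) h
  simp only [sub_mulVec, smul_mulVec, one_mulVec, dotProduct_sub, dotProduct_smul, hw,
    dotProduct_zero, smul_eq_mul] at hq
  nlinarith [mul_nonneg ht.le (reMat_nonneg hY w), mul_pos (sub_pos.2 hlt) hpos]

lemma frobR_sub_pos {X : Matrix (Fin 3) (Fin 3) ℂ} (hX : X ∈ P1) :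
    0 < frobR (reMat X - ((1 : ℝ)/3) • 1) :=
  frobR_pos (sub_ne_zero.2 (reMat_ne hX))

lemma sqrt_two_thirds_pos : 0 < √((2 : ℝ)/3) := Real.sqrt_pos.2 (by norm_num)

lemma reMat_eq_of_f1_eq {X Y : Matrix (Fin 3) (Fin 3) ℂ} (hX : X ∈ P1) (hY : Y ∈ P1)
    (h : f1 X = f1 Y) : reMat X = reMat Y := by
  have hx := div_pos sqrt_two_thirds_pos (frobR_sub_pos hX)
  have hy := div_pos sqrt_two_thirds_pos (frobR_sub_pos hY)
  have h' := add_left_cancel h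
  set a := √(2/3) / frobR (reMat X - ((1 : ℝ)/3) • 1)
  set b := √(2/3) / frobR (reMat Y - ((1 : ℝ)/3) • 1)
  have h1 : reMat X - ((1 : ℝ)/3) • 1 = (a⁻¹ * b) • (reMat Y - ((1 : ℝ)/3) • 1) := by
    rw [mul_smul, ← h', inv_smul_smul₀ hx.ne']
  have h2 : reMat Y - ((1 : ℝ)/3) • 1 = (b⁻¹ * a) • (reMat X - ((1 : ℝ)/3) • 1) := by
    rw [mul_smul, h', inv_smul_smul₀ hy.ne']
  have t1 := one_le_of_ray hX hY (by positivity) h1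
  have t2 := one_le_of_ray hY hX (by positivity) h2
  have hab : a = b := by
    rw [inv_mul_eq_div, one_le_div hx] at t1
    rw [inv_mul_eq_div, one_le_div hy] at t2
    exact le_antisymm t1 t2
  rw [hab, inv_mul_cancel₀ hy.ne', one_smul] at h1
  exact sub_left_injective h1

/-! ### The image of `f₁` -/

lemma f1_mem {X : Matrix (Fin 3) (Fin 3) ℂ} (hX : X ∈ P1) : f1 X ∈ sphereS := by
  have hp := frobR_sub_pos hX
  refine ⟨?_, ?_, ?_⟩
  · have hs := reMat_isSymm hX
    simp only [f1, IsSymm, transpose_add, transpose_smul, transpose_sub, transpose_one, hs.eq]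
  · simp only [f1, trace_add, trace_smul, trace_sub, reMat_trace hX, trace_one]
    norm_num
  · rw [f1, add_sub_cancel_left, frobR_smul (div_nonneg (Real.sqrt_nonneg _) hp.le),
      div_mul_cancel₀ _ hp.ne']

/-- A nonnegative diagonal matrix of trace `1` with a zero on the diagonal is the real part of a
point of `P₁`: take a unit vector with a real and a purely
imaginary coordinate at the two other places. -/
lemma exists_diagonal (c : Fin 3 → ℝ) (hc : ∀ i, 0 ≤ c i) (hs : ∑ i, c i = 1) (k : Fin 3)
    (hk : c k = 0) : ∃ X ∈ P1, reMat X = diagonal c := by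
  let x : Fin 3 → ℂ := fun i => if i = k + 1 then (√(c i) : ℂ) else √(c i) * Complex.I
  refine ⟨of fun i j => x i * starRingEnd ℂ (x j), ⟨x, ?_, fun _ _ => rfl⟩, ?_⟩
  · rw [← hs]
    refine Finset.sum_congr rfl fun i _ => ?_
    by_cases h : i = k + 1 <;> simp [x, h, Real.sq_sqrt (hc _)]
  · have hq : ∀ i, √(c i) * √(c i) = c i := fun i => Real.mul_self_sqrt (hc i)
    have hk' : √(c k) = 0 := by rw [hk, Real.sqrt_zero]
    ext i j
    fin_cases k <;> fin_cases i <;> fin_cases j <;>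
      simp_all [reMat, x]

lemma exists_preimage {S : Matrix (Fin 3) (Fin 3) ℝ} (hS : S ∈ sphereS) : ∃ X ∈ P1, f1 X = S := by
  obtain ⟨hsymm, htr, hfrob⟩ := hS
  -- Diagonalise the traceless matrix `S - I/3`.
  have hT : (S - ((1 : ℝ)/3) • 1).IsHermitian := by
    rw [IsHermitian, conjTranspose_eq_transpose_of_trivial]
    simp [hsymm.eq]
  obtain ⟨A, hA, d, hd⟩ : ∃ A : Matrix (Fin 3) (Fin 3) ℝ, A * Aᵀ = 1 ∧ ∃ d : Fin 3 → ℝ,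
      S - ((1 : ℝ)/3) • 1 = A * diagonal d * Aᵀ := by
    refine ⟨hT.eigenvectorUnitary, ?_, hT.eigenvalues, ?_⟩
    · have := (mem_unitaryGroup_iff).1 hT.eigenvectorUnitary.2
      rwa [star_eq_conjTranspose, conjTranspose_eq_transpose_of_trivial] at this
    · have := hT.spectral_theorem
      rw [Unitary.conjStarAlgAut_apply] at this
      simpa [star_eq_conjTranspose, conjTranspose_eq_transpose_of_trivial] using this
  have hA' : Aᵀ * A = 1 := mul_eq_one_comm.1 hA
  have hsum : ∑ i, d i = 0 := by
    have h1 : (S - ((1 : ℝ)/3) • 1).trace = 0 := by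
      rw [trace_sub, htr, trace_smul, trace_one]
      norm_num
    rwa [hd, trace_mul_comm, ← Matrix.mul_assoc, hA', Matrix.one_mul, trace_diagonal] at h1
  have hd0 : d ≠ 0 := by
    rintro rfl
    have : frobR (0 : Matrix (Fin 3) (Fin 3) ℝ) = 0 := by simp [frobR]
    rw [hd, frobR_conj hA, diagonal_zero', this] at hfrob
    exact sqrt_two_thirds_pos.ne hfrob
  obtain ⟨k, hk⟩ := Finite.exists_min d
  have hneg : d k < 0 := by
    by_contra! h
    refine hd0 (funext fun i => ?_)
    exact (Finset.sum_eq_zero_iff_of_nonneg fun i _ => h.trans (hk i)).1 hsum i (Finset.mem_univ i)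
  -- Scale by `s = 1/(3μ)`, where `-μ` is the least eigenvalue.
  set s : ℝ := 1 / (3 * -d k) with hs
  have hspos : 0 < s := by
    have := neg_pos.2 hneg
    positivity
  have hsk : s * d k = -(1/3) := by
    have := hneg.ne
    rw [hs]
    field_simp
  obtain ⟨X, hX, hXd⟩ := exists_diagonal (fun i => 1/3 + s * d i)
    (fun i => by nlinarith [mul_le_mul_of_nonneg_left (hk i) hspos.le])
    (by
      rw [Finset.sum_add_distrib, ← Finset.mul_sum, hsum]
      norm_num) k (by rw [hsk]; norm_num)
  refine ⟨_, conj_mem_P1 hA hX, ?_⟩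
  have hsub : reMat X - ((1 : ℝ)/3) • 1 = s • diagonal d := by
    rw [hXd]
    ext i j
    by_cases h : i = j <;> simp [h, one_apply]
  have hfd : frobR (diagonal d) = √(2/3) := by rw [← hfrob, hd, frobR_conj hA]
  have hcoef : √(2/3) / (s * √((2:ℝ)/3)) * s = 1 := by
    have := sqrt_two_thirds_pos
    field_simp
  rw [f1_conj hA, f1, hsub, frobR_smul hspos.le, hfd, smul_smul, hcoef, one_smul,
    Matrix.mul_add, Matrix.add_mul, ← hd, Matrix.mul_smul,
    Matrix.smul_mul, Matrix.mul_one, hA]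
  abel

/-! ### Continuity, compactness and the quotient -/

lemma continuousOn_f1 : ContinuousOn f1 P1 := by
  have hre : Continuous reMat := continuous_id.matrix_map Complex.continuous_re
  have hsub : Continuous fun M => reMat M - ((1 : ℝ)/3) • 1 := hre.sub continuous_const
  have hfr : Continuous frobR := by
    unfold frobR
    fun_prop
  unfold f1
  refine continuousOn_const.add (ContinuousOn.fun_smul ?_ hsub.continuousOn)
  exact continuousOn_const.div (hfr.comp hsub).continuousOn fun X hX => (frobR_sub_pos hX).ne'

lemma isCompact_P1 : IsCompact P1 := by
  have himg : P1 = (fun x : EuclideanSpace ℂ (Fin 3) =>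
      (Matrix.of fun i j => x i * starRingEnd ℂ (x j) : Matrix (Fin 3) (Fin 3) ℂ)) ''
      Metric.sphere 0 1 := by
    ext X
    constructor
    · rintro ⟨x, hx, hX⟩
      refine ⟨WithLp.toLp 2 x, ?_, ?_⟩
      · simp [EuclideanSpace.norm_eq, hx]
      · ext i j
        simp [hX]
    · rintro ⟨x, hx, rfl⟩
      refine ⟨fun i => x i, ?_, fun i j => rfl⟩
      rw [mem_sphere_zero_iff_norm] at hx
      rw [← EuclideanSpace.norm_sq_eq, hx, one_pow]
  rw [himg]
  refine (isCompact_sphere _ _).image ?_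
  refine continuous_matrix fun i j => ?_
  simp only [of_apply]
  fun_prop

lemma f1_eq_iff {X Y : Matrix (Fin 3) (Fin 3) ℂ} (hX : X ∈ P1) (hY : Y ∈ P1) :
    f1 X = f1 Y ↔ (Y = X ∨ Y = X.map (starRingEnd ℂ)) := by
  refine ⟨fun h => eq_or_conj_of_reMat_eq hX hY (reMat_eq_of_f1_eq hX hY h), ?_⟩
  rintro (rfl | rfl)
  · rfl
  · have : reMat (X.map (starRingEnd ℂ)) = reMat X := by
      ext i j
      simp [reMat]
    rw [f1, f1, this]

/-- The map `P₁ / conjugation → S` induced by `f₁`. -/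
noncomputable def f1Quot : Quot conjRelP1 → sphereS :=
  Quot.lift (fun p => ⟨f1 p, f1_mem p.2⟩) fun p q h => Subtype.ext ((f1_eq_iff p.2 q.2).2 h)

lemma continuous_f1Quot : Continuous f1Quot :=
  continuous_quot_lift _ (continuousOn_f1.domRestrict.subtype_mk _)

lemma bijective_f1Quot : Function.Bijective f1Quot := by
  constructor
  · rintro ⟨p⟩ ⟨q⟩ h
    exact Quot.sound ((f1_eq_iff p.2 q.2).1 (congrArg Subtype.val h))
  · rintro ⟨S, hS⟩
    obtain ⟨X, hX, rfl⟩ := exists_preimage hS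
    exact ⟨Quot.mk _ ⟨X, hX⟩, rfl⟩

/-- Theorem A for `n = 1`: `f₁` is well defined and continuous on `P₁`, has image the
sphere `S`, identifies exactly conjugate points, is `SO(3)`-equivariant, and induces a
homeomorphism `P₁/conjugation ≃ S ≅ S⁴`. -/
theorem theoremA_n1 :
    (∀ X ∈ P1, reMat X ≠ ((1 : ℝ)/3) • 1) ∧
    ContinuousOn f1 P1 ∧
    f1 '' P1 = sphereS ∧
    (∀ X ∈ P1, ∀ Y ∈ P1, (f1 X = f1 Y ↔ (Y = X ∨ Y = X.map (starRingEnd ℂ)))) ∧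
    (∀ A : Matrix (Fin 3) (Fin 3) ℝ, A * Aᵀ = 1 → A.det = 1 → ∀ X ∈ P1,
      f1 (A.map Complex.ofReal * X * (A.map Complex.ofReal)ᵀ) = A * f1 X * Aᵀ) ∧
    (∃ h : Quot conjRelP1 ≃ₜ sphereS,
      ∀ p : P1, (h (Quot.mk conjRelP1 p) : Matrix (Fin 3) (Fin 3) ℝ)
        = f1 (p : Matrix (Fin 3) (Fin 3) ℂ)) := by
  refine ⟨fun X hX => reMat_ne hX, continuousOn_f1, ?_, fun X hX Y hY => f1_eq_iff hX hY,
    fun A hA _ X _ => f1_conj hA X, ?_⟩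
  · ext S
    exact ⟨fun ⟨X, hX, h⟩ => h ▸ f1_mem hX, exists_preimage⟩
  · have : CompactSpace P1 := isCompact_iff_compactSpace.1 isCompact_P1
    exact ⟨Continuous.homeoOfEquivCompactToT2 (f := Equiv.ofBijective f1Quot bijective_f1Quot)
      continuous_f1Quot, fun p => rfl⟩
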